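/- arXiv:1009.5106 — 3 statements merged into one kernel-verified Lean document; each statement's English description precedes it below -/
import Mathlib

section
/- For every even integer n > 1, r(n) ≤ n²/2. -/
/-- A cycle `c` of elements of `{1,...,n}` is a rosary of degree `n` if every
permutation of `{1,...,n}` occurs as a subsequence of some rotation of `c`. -/
def IsRosary (n : ℕ) (c : List ℕ) : Prop :=
  (∀ x ∈ c, 1 ≤ x ∧ x ≤ n) ∧
  ∀ p : List ℕ, p.Perm (List.range' 1 n) → ∃ j, p.Sublist (c.rotate j)

/-- `rosaryNumber n` is the minimal length of a rosary of degree `n`. -/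
noncomputable def rosaryNumber (n : ℕ) : ℕ :=
  sInf {r | ∃ c : List ℕ, c.length = r ∧ IsRosary n c}

theorem ros_embed (w : List ℕ) (K : ℕ → ℕ) (hs : w.Pairwise (fun x y => K x < K y))
    (P : ℕ → ℕ) (hP : ∀ i, P i ∈ w) (L : ℕ) :
    ∀ (i m : ℕ) (w1 w2 : List ℕ), w = w1 ++ P i :: w2 →
      (∑ j ∈ Finset.range L, (if K (P (i + j)) < K (P (i + j + 1)) then 0 else 1)) ≤ m →
      ((List.range' i (L + 1)).map P).Sublist (P i :: w2 ++ (List.replicate m w).flatten) := by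
  induction L with
  | zero =>
    intro i m w1 w2 hw hm
    simp
  | succ L ih =>
    intro i m w1 w2 hw hm
    rw [Finset.sum_range_succ'] at hm
    have e : (∑ j ∈ Finset.range L, (if K (P (i + (j+1))) < K (P (i + (j+1) + 1)) then 0 else 1))
        = ∑ j ∈ Finset.range L, (if K (P (i + 1 + j)) < K (P (i + 1 + j + 1)) then 0 else 1) := by
      apply Finset.sum_congr rfl
      intro j _
      rw [show i + (j+1) = i + 1 + j by ring]
    rw [e] at hm
    rw [List.range'_succ, List.map_cons, List.cons_append]
    apply List.Sublist.cons_cons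
    by_cases h : K (P i) < K (P (i + 1))
    · have hmem : P (i+1) ∈ w2 := by
        have h1 := hP (i+1)
        rw [hw] at h1 hs
        rw [List.pairwise_append] at hs
        rcases List.mem_append.1 h1 with h2 | h2
        · have := hs.2.2 _ h2 (P i) (by simp)
          omega
        · rcases List.mem_cons.1 h2 with h3 | h3
          · rw [h3] at h; omega
          · exact h3
      obtain ⟨w3, w4, h4⟩ := List.append_of_mem hmem
      have := ih (i+1) m (w1 ++ P i :: w3) w4 (by rw [hw, h4]; simp) (by
        simp only [Nat.add_zero] at hm
        omega)
      refine this.trans ?_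
      rw [h4, List.append_assoc]
      exact List.sublist_append_right _ _
    · simp only [Nat.add_zero, if_neg h] at hm
      obtain ⟨m', rfl⟩ : ∃ m', m = m' + 1 := ⟨m - 1, by omega⟩
      obtain ⟨w3, w4, h4⟩ := List.append_of_mem (hP (i+1))
      have := ih (i+1) m' w3 w4 h4 (by omega)
      refine this.trans ?_
      rw [List.replicate_succ, List.flatten_cons]
      refine List.Sublist.trans ?_ (List.sublist_append_right _ _)
      refine List.Sublist.append ?_ (List.Sublist.refl _)
      conv_rhs => rw [h4]
      exact List.sublist_append_right _ _

theorem ros_embed' (w : List ℕ) (K : ℕ → ℕ) (hs : w.Pairwise (fun x y => K x < K y))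
    (P : ℕ → ℕ) (hP : ∀ i, P i ∈ w) (L i m : ℕ)
    (h : L = 0 ∨ (∑ j ∈ Finset.range (L - 1),
      (if K (P (i + j)) < K (P (i + j + 1)) then 0 else 1)) + 1 ≤ m) :
    ((List.range' i L).map P).Sublist (List.replicate m w).flatten := by
  rcases Nat.eq_zero_or_pos L with h0 | h0
  · subst h0; simp
  · have h := h.resolve_left (by omega)
    obtain ⟨L, rfl⟩ : ∃ m', L = m' + 1 := ⟨L - 1, by omega⟩
    obtain ⟨m, rfl⟩ : ∃ m', m = m' + 1 := ⟨m - 1, by omega⟩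
    obtain ⟨w3, w4, h4⟩ := List.append_of_mem (hP i)
    refine (ros_embed w K hs P hP L i m w3 w4 h4 (by simpa using h)).trans ?_
    rw [List.replicate_succ, List.flatten_cons]
    refine List.Sublist.append ?_ (List.Sublist.refl _)
    conv_rhs => rw [h4]
    exact List.sublist_append_right _ _

theorem ros_shift (f : ℕ → ℕ) (n : ℕ) (hf : ∀ i, f (i + n) = f i) (j : ℕ) :
    ∑ i ∈ Finset.range n, f (j + i) = ∑ i ∈ Finset.range n, f i := by
  induction j with
  | zero => simp
  | succ j ih =>
    rw [← ih]
    have h1 := Finset.sum_range_succ (fun i => f (j + i)) n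
    have h2 := Finset.sum_range_succ' (fun i => f (j + i)) n
    simp only [Nat.add_zero, hf] at h1 h2
    have e : ∑ i ∈ Finset.range n, f (j + 1 + i) = ∑ i ∈ Finset.range n, f (j + (i + 1)) :=
      Finset.sum_congr rfl (fun i _ => by rw [show j + 1 + i = j + (i+1) by ring])
    omega

theorem ros_tele (f g e : ℕ → ℕ) (h : ∀ i, f i + g i + e i = 1 + e (i + 1)) (i L : ℕ) :
    ∑ j ∈ Finset.range L, f (i + j) + ∑ j ∈ Finset.range L, g (i + j) + e i = L + e (i + L) := by
  induction L with
  | zero => simp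
  | succ L ih =>
    rw [Finset.sum_range_succ, Finset.sum_range_succ]
    have := h (i + L)
    rw [show i + (L + 1) = i + L + 1 by ring]
    omega

theorem ros_comb (n a b c : ℕ) (hn : 2 ≤ n) (hc : c ≤ 1) (hb : b = a + c) (hab : n = 2 * (a + b))
    (f g e : ℕ → ℕ) (h : ∀ i, f i + g i + e i = 1 + e (i + 1))
    (hf : ∀ i, f (i + n) = f i) (hg : ∀ i, g (i + n) = g i)
    (he : ∀ i, e i = if i % n = 0 then 1 else 0)
    (hfin : f (n - 1) = 1) (hgin : g (n - 1) = 1) :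
    ∃ i L, L ≤ n ∧ ∑ j ∈ Finset.range (L - 1), f (i + j) + 1 ≤ b ∧
      (n - L = 0 ∨ ∑ j ∈ Finset.range (n - L - 1), g (i + L + j) + 1 ≤ a) := by
  obtain ⟨F, hF⟩ : ∃ F, F = ∑ i ∈ Finset.range n, f i := ⟨_, rfl⟩
  obtain ⟨G, hG⟩ : ∃ G, G = ∑ i ∈ Finset.range n, g i := ⟨_, rfl⟩
  have hFG : F + G = n := by
    have := ros_tele f g e h 0 n
    simp only [Nat.zero_add, he, Nat.mod_self, Nat.zero_mod] at this
    simp at this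
    omega
  have hF1 : 1 ≤ F := by
    rw [hF, ← hfin]
    exact Finset.single_le_sum (f := f) (fun _ _ => Nat.zero_le _) (Finset.mem_range.2 (by omega))
  have hG1 : 1 ≤ G := by
    rw [hG, ← hgin]
    exact Finset.single_le_sum (f := g) (fun _ _ => Nat.zero_le _) (Finset.mem_range.2 (by omega))
  obtain ⟨L, hL⟩ : ∃ L, L = G + c := ⟨_, rfl⟩
  have hLn : L ≤ n := by omega
  have hfk : ∀ i, (i + 1) % n = 0 → f i = 1 ∧ g i = 1 := by
    intro i hi
    have h1 := Nat.div_add_mod (i+1) n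
    rw [hi] at h1
    obtain ⟨q, hq⟩ : ∃ q, (i + 1) / n = q + 1 := by
      refine ⟨(i+1)/n - 1, ?_⟩
      rcases Nat.eq_zero_or_pos ((i+1)/n) with h0 | h0
      · rw [h0] at h1; omega
      · omega
    rw [hq] at h1
    have h2 : i = (n - 1) + q * n := by
      have : n * (q + 1) = q * n + n := by ring
      omega
    have per : ∀ (f : ℕ → ℕ), (∀ i, f (i + n) = f i) → ∀ q, f ((n - 1) + q * n) = f (n - 1) := by
      intro f hf q
      induction q with
      | zero => simp
      | succ q ih => rw [← ih, ← hf ((n-1) + q * n)]; congr 1; ring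
    rw [h2, per f hf, per g hg]
    exact ⟨hfin, hgin⟩
  have hT : ∀ i, (∑ j ∈ Finset.range (n - L), g (i + L + j)) + c + e (i + L)
      = (∑ j ∈ Finset.range L, f (i + j)) + e i := by
    intro i
    have h1 := ros_tele f g e h i L
    have h2 := ros_shift g n hg i
    have h3 := Finset.sum_range_add (fun j => g (i + j)) L (n - L)
    rw [show L + (n - L) = n by omega] at h3
    simp only [← Nat.add_assoc] at h3
    omega
  by_cases hex : ∃ i, (∑ j ∈ Finset.range L, f (i + j)) + 1 ≤ b
  · obtain ⟨i, hi⟩ := hex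
    refine ⟨i, L, hLn, ?_, ?_⟩
    · have : ∑ j ∈ Finset.range (L - 1), f (i + j) ≤ ∑ j ∈ Finset.range L, f (i + j) :=
        Finset.sum_le_sum_of_subset (Finset.range_mono (by omega))
      omega
    · by_cases hz : n - L = 0
      · exact Or.inl hz
      right
      have h1 := hT i
      have h3 := Finset.sum_range_succ (fun j => g (i + L + j)) (n - L - 1)
      rw [show n - L - 1 + 1 = n - L by omega] at h3
      have h4 := he i
      by_cases hi0 : i % n = 0
      · rw [if_pos hi0] at h4
        have h5 := (hfk (i + L + (n - L - 1)) (by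
          rw [show i + L + (n - L - 1) + 1 = i + n by omega]; simpa using hi0)).2
        omega
      · rw [if_neg hi0] at h4
        omega
  · push Not at hex
    have hsum : ∑ i ∈ Finset.range n, ∑ j ∈ Finset.range L, f (i + j) = L * F := by
      rw [Finset.sum_comm]
      have : ∀ j ∈ Finset.range L, ∑ i ∈ Finset.range n, f (i + j) = F := by
        intro j _
        rw [hF, ← ros_shift f n hf j]
        exact Finset.sum_congr rfl (fun i _ => by rw [Nat.add_comm])
      rw [Finset.sum_congr rfl this]
      simp
    have hle : L * F ≤ n * b := by
      have hLF : L + F = 2 * (a + b) + c := by omega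
      have hn' : n * b = 2 * (a + b) * b := by rw [hab]
      rw [hn']
      subst hb
      interval_cases c
      · zify at hLF ⊢
        nlinarith [sq_nonneg ((L:ℤ) - F)]
      · have h0 : (L:ℤ) = 4 * a + 3 - F := by omega
        zify
        rw [h0]
        rcases le_or_gt (F:ℤ) (2 * a + 1) with h1 | h1
        · nlinarith
        · have : (F:ℤ) ≥ 2 * a + 2 := by omega
          nlinarith
    have hall : ∀ i ∈ Finset.range n, b = ∑ j ∈ Finset.range L, f (i + j) := by
      rw [← Finset.sum_eq_sum_iff_of_le (fun i _ => by have := hex i; omega)]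
      apply le_antisymm
      · exact Finset.sum_le_sum (fun i _ => by have := hex i; omega)
      · rw [hsum]; simpa using hle
    refine ⟨n - L, L, hLn, ?_, ?_⟩
    · have h1 := hall (n - L) (Finset.mem_range.2 (by omega))
      have h3 := Finset.sum_range_succ (fun j => f (n - L + j)) (L - 1)
      rw [show L - 1 + 1 = L by omega] at h3
      have h5 := (hfk (n - L + (L - 1)) (by
          rw [show n - L + (L - 1) + 1 = n by omega]; simp)).1
      omega
    · by_cases hz : n - L = 0
      · exact Or.inl hz
      right
      have h1 := hall (n - L) (Finset.mem_range.2 (by omega))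
      have h2 := hT (n - L)
      have h4 := he (n - L)
      rw [Nat.mod_eq_of_lt (by omega), if_neg hz] at h4
      have h6 := he (n - L + L)
      rw [if_pos (by rw [show n - L + L = n by omega, Nat.mod_self])] at h6
      have : ∑ j ∈ Finset.range (n - L - 1), g (n - L + L + j)
          ≤ ∑ j ∈ Finset.range (n - L), g (n - L + L + j) :=
        Finset.sum_le_sum_of_subset (Finset.range_mono (by omega))
      omega

theorem ros_rot {p l c : List ℕ} (h : p ~r l) (hs : ∃ j, l.Sublist (c.rotate j)) :
    ∃ j, p.Sublist (c.rotate j) := by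
  obtain ⟨j, hj⟩ := hs
  obtain ⟨k, hk, hk'⟩ := List.isRotated_iff_mod.1 h.symm
  rw [List.rotate_eq_drop_append_take hk] at hk'
  rw [← List.take_append_drop k l] at hj
  obtain ⟨c1, c2, hc, h1, h2⟩ := List.append_sublist_iff.1 hj
  have h3 : p.Sublist (c2 ++ c1) := by rw [← hk']; exact h2.append h1
  have h4 : c ~r (c2 ++ c1) := by
    refine List.IsRotated.trans ⟨j, rfl⟩ ?_
    rw [hc]
    exact List.isRotated_append
  obtain ⟨m, hm⟩ := h4
  exact ⟨m, by rw [hm]; exact h3⟩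

theorem gupta_even (n : ℕ) (hn : 1 < n) (he : Even n) : rosaryNumber n ≤ n ^ 2 / 2 := by
  obtain ⟨k, hk⟩ := he
  obtain ⟨a, b, c, hc, hb, hab⟩ : ∃ a b c : ℕ, c ≤ 1 ∧ b = a + c ∧ n = 2 * (a + b) :=
    ⟨k / 2, k - k / 2, k % 2, by omega, by omega, by omega⟩
  apply Nat.sInf_le
  let u := List.range' 1 n
  let v := 1 :: (List.range' 2 (n - 1)).reverse
  have hu : ∀ x, x ∈ u ↔ 1 ≤ x ∧ x ≤ n := by
    intro x; simp only [u, List.mem_range'_1]; omega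
  have hv : ∀ x, x ∈ v ↔ 1 ≤ x ∧ x ≤ n := by
    intro x; simp only [v, List.mem_cons, List.mem_reverse, List.mem_range'_1]; omega
  refine ⟨(List.replicate b v).flatten ++ (List.replicate a u).flatten, ?_, ?_, ?_⟩
  · have e1 : u.length = n := by simp [u]
    have e2 : v.length = n := by simp [v]; omega
    simp only [List.length_append, List.length_flatten, List.map_replicate, List.sum_replicate,
      e1, e2, smul_eq_mul]
    rw [← Nat.add_mul, sq]
    symm
    apply Nat.div_eq_of_eq_mul_right (by norm_num)
    rw [← Nat.mul_assoc]
    congr 1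
    omega
  · intro x hx
    simp only [List.mem_append, List.mem_flatten, List.mem_replicate] at hx
    rcases hx with ⟨l, ⟨_, rfl⟩, h⟩ | ⟨l, ⟨_, rfl⟩, h⟩
    · exact (hv x).1 h
    · exact (hu x).1 h
  intro p hp
  have h1p : 1 ∈ p := hp.mem_iff.2 ((hu 1).2 (by omega))
  obtain ⟨s, t, hst⟩ := List.append_of_mem h1p
  obtain ⟨l, hl⟩ : ∃ l, l = (1 :: t) ++ s := ⟨_, rfl⟩
  have hrot : p ~r l := by rw [hst, hl]; exact List.isRotated_append
  have hlp : l.Perm (List.range' 1 n) := hrot.perm.symm.trans hp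
  have hlen : l.length = n := by rw [hlp.length_eq]; simp
  have hnd : l.Nodup := hlp.nodup_iff.2 (List.nodup_range')
  apply ros_rot hrot
  have hmod : ∀ i, i % n < l.length := fun i => by rw [hlen]; exact Nat.mod_lt _ (by omega)
  obtain ⟨P, hP⟩ : ∃ P : ℕ → ℕ, ∀ i, P i = l[i % n]'(hmod i) := ⟨_, fun i => rfl⟩
  have hPr : ∀ i, 1 ≤ P i ∧ P i ≤ n := by
    intro i
    rw [← hu, ← hlp.mem_iff, hP]
    exact List.getElem_mem _
  have hPinj : ∀ i j, P i = P j ↔ i % n = j % n := by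
    intro i j
    rw [hP, hP, hnd.getElem_inj_iff]
  have hP0 : P 0 = 1 := by
    rw [hP]; simp [hl]
  have hP1 : ∀ i, P i = 1 ↔ i % n = 0 := by
    intro i; rw [← hP0, hPinj]; simp
  have hPper : ∀ i, P (i + n) = P i := by
    intro i; rw [hPinj]; simp
  have hPne : ∀ i, P i ≠ P (i + 1) := by
    intro i h
    rw [hPinj] at h
    have h' : i ≡ i + 1 [MOD n] := h
    have := (Nat.modEq_iff_dvd' (by omega)).1 h'
    simp at this
    omega
  let K : ℕ → ℕ := fun x => if x = 1 then 0 else n + 2 - x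
  have hPn1 : P (n - 1 + 1) = 1 := by rw [hP1, Nat.sub_add_cancel (by omega)]; simp
  have hPn2 : P (n - 1) ≠ 1 := fun h => hPne (n - 1) (h.trans hPn1.symm)
  obtain ⟨i, L, hLn, hB, hA⟩ := ros_comb n a b c (by omega) hc hb hab
    (fun i => if K (P i) < K (P (i + 1)) then 0 else 1)
    (fun i => if id (P i) < id (P (i + 1)) then 0 else 1)
    (fun i => if P i = 1 then 1 else 0)
    (by
      intro i
      have h1 := hPr i
      have h2 := hPr (i+1)
      have h3 := hPne i
      simp only [K, id]
      split_ifs <;> omega)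
    (by intro i; simp only [show i + n + 1 = i + 1 + n by ring, hPper])
    (by intro i; simp only [show i + n + 1 = i + 1 + n by ring, hPper])
    (by intro i; simp only [hP1])
    (by simp [K, hPn1])
    (by have := hPr (n-1); simp only [hPn1, id]; rw [if_neg]; omega)
  have hBs := ros_embed' v K (by
      simp only [v, List.pairwise_cons, List.pairwise_reverse]
      constructor
      · intro x hx
        simp only [List.mem_reverse, List.mem_range'_1] at hx
        simp only [K]; split_ifs <;> omega
      · refine List.Pairwise.imp_of_mem ?_ (List.pairwise_lt_range' (s := 2) (n := n - 1) (step := 1))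
        intro x y hx hy hxy
        simp only [List.mem_range'_1] at hx hy
        simp only [K]; split_ifs <;> omega)
    P (fun i => (hv _).2 (hPr i)) L i b (Or.inr hB)
  have hAs := ros_embed' u id (by
      simpa [u] using (List.pairwise_lt_range' (s := 1) (n := n) (step := 1)))
    P (fun i => (hu _).2 (hPr i)) (n - L) (i + L) a hA
  have hlr : l.rotate i = (List.range' i L).map P ++ (List.range' (i + L) (n - L)).map P := by
    rw [← List.map_append, List.range'_append_1, Nat.add_sub_cancel' hLn]
    apply List.ext_getElem
    · simp [hlen]
    · intro j h1 h2
      simp only [List.getElem_rotate, List.getElem_map, List.getElem_range', hP, hlen]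
      congr 2
      omega
  have hfin : (l.rotate i).Sublist ((List.replicate b v).flatten ++ (List.replicate a u).flatten) := by
    rw [hlr]; exact hBs.append hAs
  exact ros_rot (l := l.rotate i) ⟨i, rfl⟩ ⟨0, by simpa using hfin⟩
end

section
/- The cyclic sequence 1,2,3,4,5,6,1,2,1,5,6,4,3,1,2,6,5 of length 17 is a rosary of degree 6. -/
def subB : List ℕ → List ℕ → Bool
  | [], _ => true
  | _ :: _, [] => false
  | a :: p, b :: l => bif Nat.beq a b then subB p l else subB (a :: p) l

theorem subB_sound : ∀ (l p : List ℕ), subB p l = true → p.Sublist l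
  | l, [], _ => List.nil_sublist l
  | [], _ :: _, h => by simp [subB] at h
  | b :: l, a :: p, h => by
    rw [subB] at h
    cases hab : Nat.beq a b with
    | true =>
      rw [hab] at h
      have := Nat.eq_of_beq_eq_true hab
      subst this
      exact (subB_sound l p h).cons_cons a
    | false =>
      rw [hab] at h
      exact (subB_sound l (a :: p) h).cons b

theorem rosary_aux : ((List.range' 1 6).permutations'.all fun p =>
    (List.range 17).any fun j =>
      subB p ([1, 2, 3, 4, 5, 6, 1, 2, 1, 5, 6, 4, 3, 1, 2, 6, 5].rotate j)) = true := by
  decide +kernel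

theorem rosary_six_17' :
    IsRosary 6 [1, 2, 3, 4, 5, 6, 1, 2, 1, 5, 6, 4, 3, 1, 2, 6, 5] := by
  refine ⟨by decide, fun p hp => ?_⟩
  have h := List.all_eq_true.1 rosary_aux p (List.mem_permutations'.2 hp)
  obtain ⟨j, -, hj⟩ := List.any_eq_true.1 h
  exact ⟨j, subB_sound _ _ hj⟩
end

section
/- The cyclic sequence 1,2,3,4,5,6,7,8,1,2,3,4,5,6,7,8,6,5,4,3,2,1,7,6,5,4,3,2,1,8,7 of length 31 is a rosary of degree 8; hence r(8) ≤ 31 < 8²/2 = 32. -/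
namespace RosaryAux

def adv (x : ℕ) : List ℕ → List (List ℕ)
  | [] => []
  | a :: t => bif Nat.beq a x then [t] else adv x t

def advs (x : ℕ) : List (List ℕ) → List (List ℕ)
  | [] => []
  | s :: S => adv x s ++ advs x S

def del (x : ℕ) : List ℕ → List ℕ
  | [] => []
  | a :: t => bif Nat.beq a x then t else a :: del x t

def allB (f : ℕ → Bool) : List ℕ → Bool
  | [] => true
  | a :: t => bif f a then allB f t else false

def go : ℕ → List ℕ → List (List ℕ) → Bool
  | _, _, [] => false
  | 0, _, _ :: _ => true
  | n + 1, rem, s :: S => allB (fun x => go n (del x rem) (advs x (s :: S))) rem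

theorem beq_iff (a x : ℕ) : Nat.beq a x = decide (a = x) := by
  by_cases h : a = x
  · subst h; simp
  · simp only [h, decide_false]; exact Bool.eq_false_iff.2 (fun h' => h (Nat.eq_of_beq_eq_true h'))

theorem adv_sound {x : ℕ} {s t : List ℕ} (h : t ∈ adv x s) : (x :: t).Sublist s := by
  induction s with
  | nil => simp [adv] at h
  | cons a s ih =>
    by_cases hx : a = x
    · simp [adv, hx] at h; subst h; subst hx; exact List.Sublist.refl _
    · simp [adv, beq_iff, hx] at h; exact (ih h).cons _

theorem advs_sound {x : ℕ} {S : List (List ℕ)} {t : List ℕ} (h : t ∈ advs x S) :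
    ∃ s ∈ S, (x :: t).Sublist s := by
  induction S with
  | nil => simp [advs] at h
  | cons s S ih =>
    simp only [advs, List.mem_append] at h
    rcases h with h | h
    · exact ⟨s, by simp, adv_sound h⟩
    · obtain ⟨u, hu, h'⟩ := ih h
      exact ⟨u, by simp [hu], h'⟩

theorem del_eq (x : ℕ) (l : List ℕ) : del x l = l.erase x := by
  induction l with
  | nil => rfl
  | cons a l ih =>
    by_cases hx : a = x
    · simp [del, hx]
    · simp [del, beq_iff, hx, ih]

theorem allB_sound {f : ℕ → Bool} {l : List ℕ} (h : allB f l = true) : ∀ x ∈ l, f x = true := by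
  induction l with
  | nil => simp
  | cons a l ih =>
    cases ha : f a <;> simp [allB, ha] at h
    intro x hx
    rcases List.mem_cons.1 hx with rfl | hx
    · exact ha
    · exact ih h x hx

theorem go_sound : ∀ (n : ℕ) (rem : List ℕ) (S : List (List ℕ)), rem.length = n →
    go n rem S = true → ∀ p : List ℕ, p.Perm rem → ∃ s ∈ S, p.Sublist s
  | n, _, [], _, h, _, _ => by cases n <;> simp [go] at h
  | 0, rem, s :: S, hl, _, p, hp => by
    have : rem = [] := List.length_eq_zero_iff.1 hl
    subst this
    rw [List.perm_nil.1 hp]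
    exact ⟨s, by simp, by simp⟩
  | n + 1, rem, s :: S, hl, h, p, hp => by
    cases p with
    | nil => have := hp.length_eq; simp at this; omega
    | cons x q =>
      have hx : x ∈ rem := hp.subset (by simp)
      have h1 := allB_sound (by simpa only [go] using h) x hx
      have hq : q.Perm (rem.erase x) := (List.cons_perm_iff_perm_erase.1 hp).2
      rw [del_eq] at h1
      obtain ⟨t, ht, hqt⟩ := go_sound n _ _ (by rw [List.length_erase_of_mem hx]; omega) h1 q hq
      obtain ⟨u, hu, h'⟩ := advs_sound ht
      exact ⟨u, hu, (hqt.cons_cons x).trans h'⟩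

def delK (x : ℕ) (l : List ℕ) : (List ℕ → Bool) → Bool :=
  List.rec (fun k => k []) (fun a t ih k =>
    Bool.rec (ih (fun r => k (a :: r))) (k t) (Nat.beq a x)) l

def advK (x : ℕ) (l : List ℕ) (k : List (List ℕ) → Bool) (R : List (List ℕ)) : Bool :=
  List.rec (k R) (fun a t ih => Bool.rec ih (k (t :: R)) (Nat.beq a x)) l

def advsK (x : ℕ) (S : List (List ℕ)) : (List (List ℕ) → Bool) → Bool :=
  List.rec (fun k => k []) (fun s _ ih k => ih (fun R => advK x s k R)) S

def allK (f : ℕ → Bool) (l : List ℕ) : Bool :=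
  List.rec true (fun a _ ih => Bool.rec false ih (f a)) l

theorem allK_eq (f : ℕ → Bool) (l : List ℕ) : allK f l = allB f l := by
  induction l with
  | nil => rfl
  | cons a l ih =>
    change (Bool.rec false (allK f l) (f a) : Bool) = _
    cases h : f a <;> simp [allB, h, ih]

def goK (n : ℕ) : List ℕ → List (List ℕ) → Bool :=
  Nat.rec (fun _ S => List.rec false (fun _ _ _ => true) S)
    (fun _ ih rem S => List.rec false (fun _ _ _ =>
      allK (fun x => delK x rem (fun r => advsK x S (ih r))) rem) S) n

theorem delK_eq (x : ℕ) (l : List ℕ) (k : List ℕ → Bool) : delK x l k = k (del x l) := by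
  induction l generalizing k with
  | nil => rfl
  | cons a l ih =>
    change (Bool.rec (delK x l (fun r => k (a :: r))) (k l) (Nat.beq a x) : Bool) = _
    cases h : Nat.beq a x <;> simp only [del, h, cond_true, cond_false, ih]

theorem advK_eq (x : ℕ) (l : List ℕ) (k : List (List ℕ) → Bool) (R : List (List ℕ)) :
    advK x l k R = k (adv x l ++ R) := by
  induction l with
  | nil => rfl
  | cons a l ih =>
    change (Bool.rec (advK x l k R) (k (l :: R)) (Nat.beq a x) : Bool) = _
    cases h : Nat.beq a x <;> simp only [adv, h, cond_true, cond_false, ih]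
    rfl

theorem advsK_eq (x : ℕ) (S : List (List ℕ)) (k : List (List ℕ) → Bool) :
    advsK x S k = k (advs x S) := by
  induction S generalizing k with
  | nil => rfl
  | cons s S ih =>
    change advsK x S (fun R => advK x s k R) = _
    simp only [advs, ih, advK_eq]

theorem goK_eq : ∀ (n : ℕ) (rem : List ℕ) (S : List (List ℕ)), goK n rem S = go n rem S
  | n, _, [] => by cases n <;> rfl
  | 0, _, _ :: _ => rfl
  | n + 1, rem, s :: S => by
    change allK (fun x => delK x rem (fun r => advsK x (s :: S) (goK n r))) rem = _
    simp only [go, allK_eq, delK_eq, advsK_eq, goK_eq n]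

/-- Walk along the cycle: `u` is the part still ahead, `v` the reversed part behind. -/
def appRev : List ℕ → List ℕ → (List ℕ → Bool) → Bool
  | [], w, k => k w
  | a :: v, w, k => appRev v (a :: w) k

def appK : List ℕ → List ℕ → (List ℕ → Bool) → Bool
  | [], w, k => k w
  | a :: v, w, k => appK v w (fun r => k (a :: r))

theorem appRev_eq (v w : List ℕ) (k : List ℕ → Bool) : appRev v w k = k (v.reverse ++ w) := by
  induction v generalizing w with
  | nil => rfl
  | cons a v ih => simp [appRev, ih]

theorem appK_eq (v w : List ℕ) (k : List ℕ → Bool) : appK v w k = k (v ++ w) := by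
  induction v generalizing k with
  | nil => rfl
  | cons a v ih => simp [appK, ih]

def hdsK (x : ℕ) (k : List (List ℕ) → Bool) : List ℕ → List ℕ → List (List ℕ) → Bool
  | [], _, R => k R
  | a :: u, v, R => bif Nat.beq a x then
      appRev v [] (fun w => appK u w (fun t => hdsK x k u (a :: v) (t :: R)))
    else hdsK x k u (a :: v) R

theorem hdsK_sound (x : ℕ) (k : List (List ℕ) → Bool) (u v : List ℕ) (R : List (List ℕ))
    (h : hdsK x k u v R = true) :
    ∃ S, k S = true ∧ ∀ t ∈ S, t ∈ R ∨ ∃ j, (v.reverse ++ u).rotate j = x :: t := by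
  induction u generalizing v R with
  | nil => exact ⟨R, h, fun t ht => Or.inl ht⟩
  | cons a u ih =>
    by_cases hx : a = x
    · subst hx
      simp only [hdsK, beq_iff, decide_true, cond_true, appRev_eq, appK_eq, List.append_nil] at h
      obtain ⟨S, hk, hS⟩ := ih _ _ h
      refine ⟨S, hk, fun t ht => ?_⟩
      rcases hS t ht with h1 | ⟨j, hj⟩
      · rcases List.mem_cons.1 h1 with rfl | h1
        · refine Or.inr ⟨v.reverse.length, ?_⟩
          rw [List.rotate_append_length_eq]; rfl
        · exact Or.inl h1
      · exact Or.inr ⟨j, by simpa using hj⟩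
    · simp only [hdsK, beq_iff, hx, decide_false, cond_false] at h
      obtain ⟨S, hk, hS⟩ := ih _ _ h
      refine ⟨S, hk, fun t ht => ?_⟩
      rcases hS t ht with h1 | ⟨j, hj⟩
      · exact Or.inl h1
      · exact Or.inr ⟨j, by simpa using hj⟩

def cyc : List ℕ := [nat_lit 1, nat_lit 2, nat_lit 3, nat_lit 4, nat_lit 5, nat_lit 6, nat_lit 7, nat_lit 8, nat_lit 1, nat_lit 2, nat_lit 3, nat_lit 4, nat_lit 5, nat_lit 6, nat_lit 7, nat_lit 8, nat_lit 6, nat_lit 5, nat_lit 4, nat_lit 3, nat_lit 2, nat_lit 1,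
      nat_lit 7, nat_lit 6, nat_lit 5, nat_lit 4, nat_lit 3, nat_lit 2, nat_lit 1, nat_lit 8, nat_lit 7]

def chk (x : ℕ) : Bool :=
  delK x [nat_lit 1, nat_lit 2, nat_lit 3, nat_lit 4, nat_lit 5, nat_lit 6, nat_lit 7, nat_lit 8] (fun r => hdsK x (fun S => goK 7 r S) cyc [] [])

theorem chk_all : allK chk [nat_lit 1, nat_lit 2, nat_lit 3, nat_lit 4, nat_lit 5, nat_lit 6, nat_lit 7, nat_lit 8] = true := by
  decide +kernel

theorem main : IsRosary 8 cyc := by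
  refine ⟨by decide, fun p hp => ?_⟩
  cases p with
  | nil => have := hp.length_eq; simp at this
  | cons x q =>
    have hx : x ∈ List.range' 1 8 := hp.subset (by simp)
    have h1 := allB_sound ((allK_eq _ _).symm.trans chk_all) x hx
    have hq : q.Perm ((List.range' 1 8).erase x) := (List.cons_perm_iff_perm_erase.1 hp).2
    rw [chk, show [nat_lit 1, nat_lit 2, nat_lit 3, nat_lit 4, nat_lit 5, nat_lit 6, nat_lit 7,
      nat_lit 8] = List.range' 1 8 from rfl, delK_eq, del_eq] at h1
    obtain ⟨S, hk, hS⟩ := hdsK_sound _ _ _ _ _ h1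
    rw [goK_eq] at hk
    obtain ⟨t, ht, hqt⟩ := go_sound 7 _ _ (by rw [List.length_erase_of_mem hx]; simp) hk q hq
    obtain ⟨j, hj⟩ := (hS t ht).resolve_left (by simp)
    have hj' : cyc.rotate j = x :: t := hj
    exact ⟨j, hj' ▸ hqt.cons_cons x⟩

end RosaryAux

theorem rosary_eight_31 :
    IsRosary 8 [1, 2, 3, 4, 5, 6, 7, 8, 1, 2, 3, 4, 5, 6, 7, 8, 6, 5, 4, 3, 2, 1,
      7, 6, 5, 4, 3, 2, 1, 8, 7] ∧
    rosaryNumber 8 ≤ 31 ∧ 31 < 8 ^ 2 / 2 := by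
  refine ⟨RosaryAux.main, Nat.sInf_le ⟨RosaryAux.cyc, rfl, RosaryAux.main⟩, by norm_num⟩
end
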